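/- Let Q ⊂ ℙ^{N-1} be the common zero set of quadratic forms q_1,...,q_l with rk(q_{[1,l]}) ≥ 2l + e - 1 for some e ≥ 4, where rk denotes the minimum rank of a nonzero linear combination. Then Q is an irreducible reduced complete intersection of codimension l and codim(Sing Q ⊂ Q) ≥ e. -/

import Mathlib

open MvPolynomial

/-- The symmetric matrix (up to a factor 2) associated with a homogeneous degree-2
polynomial in `N` variables; its rank is the rank of the quadratic form. -/
noncomputable def polarMatrix {N : ℕ} (f : MvPolynomial (Fin N) ℂ) :
    Matrix (Fin N) (Fin N) ℂ := fun i j =>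
  if i = j then 2 * coeff (Finsupp.single i 2) f
  else coeff (Finsupp.single i 1 + Finsupp.single j 1) f

/-!
Let `A` be the polynomial ring, `I = (q₁, …, q_l)`, and `J` the ideal of maximal minors of the
Jacobian matrix. At a prime `P ⊇ J`, with residue field `F`, some nonzero `c ∈ F^l` satisfies
`(∑ cᵢ Bᵢ) x = 0`, where the `Bᵢ` are the matrices of the `qᵢ` and `x` is the generic point of `P`.
The rank hypothesis passes from `ℂ` to any extension field by the Nullstellensatz, so over the field
`L` generated by the `l - 1` ratios of the `cᵢ` the coordinates of `x` span a space of dimension at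
most `N - r`, where `r = 2l + e - 1`. Hence `trdeg F ≤ (l - 1) + (N - r)` and
`ht P ≥ r + 1 - l = l + e`.

Away from `J` the Jacobian criterion makes `A_P / I A_P` a regular local ring of codimension `l`, so
in all cases `ht I ≥ l`: the `qᵢ` form a regular sequence, and the dimension claims follow.
For primality, `A / I` is Cohen-Macaulay, so an ideal of height at least `l + 2` in `A` has depth at
least two on it. By Hartshorne's connectedness argument, a factorization of zero in `A / I` that is
trivial outside such a closed set would then produce a nontrivial idempotent. Homogeneity of `I`
rules this out.
-/

universe u

open IsLocalRing

section RegularLocalRing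

variable {R ι : Type*} [CommRing R] [Finite ι]

theorem exists_span_sup_span_eq_maximalIdeal [IsLocalRing R] [IsNoetherianRing R]
    {x : ι → maximalIdeal R}
    (hx : LinearIndependent (ResidueField R) fun i => (maximalIdeal R).toCotangent (x i)) :
    ∃ (n : ℕ) (y : Fin n → maximalIdeal R), Nat.card ι + n = (maximalIdeal R).spanFinrank ∧
      Ideal.span (Set.range fun i => (x i : R)) ⊔ Ideal.span (Set.range fun j => (y j : R)) =
        maximalIdeal R := by
  have := Fintype.ofFinite ι
  let W := Submodule.span (ResidueField R) (Set.range fun i => (maximalIdeal R).toCotangent (x i))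
  obtain ⟨W', hW'⟩ := exists_isCompl W
  let b := Module.finBasis (ResidueField R) W'
  choose y hy using fun j => (maximalIdeal R).toCotangent_surjective (b j : CotangentSpace R)
  refine ⟨_, y, ?_, ?_⟩
  · rw [spanFinrank_maximalIdeal_eq_finrank_cotangentSpace,
      ← Submodule.finrank_add_eq_of_isCompl hW', finrank_span_eq_card hx, Nat.card_eq_fintype_card]
  · have hyW' : Submodule.span (ResidueField R)
        (Set.range ((maximalIdeal R).toCotangent ∘ y)) = W' := by
      have := congrArg (Submodule.map W'.subtype) b.span_eq
      rw [Submodule.map_span, ← Set.range_comp, Submodule.map_top, Submodule.range_subtype] at this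
      exact (congrArg (Submodule.span _ <| Set.range ·) (funext hy)).trans this
    have hspan : Submodule.span (ResidueField R)
        ((maximalIdeal R).toCotangent '' (Set.range x ∪ Set.range y)) = ⊤ := by
      rw [Set.image_union, Submodule.span_union, ← Set.range_comp, ← Set.range_comp, hyW']
      exact hW'.sup_eq_top
    have := congrArg (Submodule.map (maximalIdeal R).subtype)
      (CotangentSpace.span_image_eq_top_iff.1 hspan)
    rw [Submodule.map_span, Set.image_union, ← Set.range_comp, ← Set.range_comp,
      Submodule.map_top, Submodule.range_subtype, Submodule.span_union] at this
    exact this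

theorem spanFinrank_maximalIdeal_quotient_add_card_le [IsLocalRing R] [IsNoetherianRing R]
    {x : ι → maximalIdeal R}
    (hx : LinearIndependent (ResidueField R) fun i => (maximalIdeal R).toCotangent (x i))
    [IsLocalRing (R ⧸ Ideal.span (Set.range fun i => (x i : R)))] :
    (maximalIdeal (R ⧸ Ideal.span (Set.range fun i => (x i : R)))).spanFinrank + Nat.card ι ≤
      (maximalIdeal R).spanFinrank := by
  obtain ⟨n, y, hcard, hspan⟩ := exists_span_sup_span_eq_maximalIdeal hx
  set I := Ideal.span (Set.range fun i => (x i : R))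
  have hmax : Ideal.span (Set.range fun j => Ideal.Quotient.mk I (y j)) = maximalIdeal (R ⧸ I) := by
    rw [← map_maximalIdeal_of_surjective (Ideal.Quotient.mk I) Ideal.Quotient.mk_surjective]
    conv_rhs => rw [← hspan]
    rw [Ideal.map_sup, Ideal.map_quotient_self, bot_sup_eq, Ideal.map_span, ← Set.range_comp]
    rfl
  have hle : (Set.range fun j => Ideal.Quotient.mk I (y j)).ncard ≤ n := by
    simpa [← Set.image_univ] using Set.ncard_image_le (Set.finite_univ (α := Fin n))
  rw [← hmax, ← hcard, add_comm]
  gcongr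
  exact (Submodule.spanFinrank_span_le_ncard_of_finite (Set.finite_range _)).trans hle

theorem ringKrullDim_le_ringKrullDim_quotient_span_range_add [IsLocalRing R] [IsNoetherianRing R]
    (x : ι → maximalIdeal R) :
    ringKrullDim R ≤ ringKrullDim (R ⧸ Ideal.span (Set.range fun i => (x i : R))) + Nat.card ι := by
  refine (ringKrullDim_le_ringKrullDim_quotient_add_encard (Set.range fun i => (x i : R)) ?_).trans
    ?_
  · rw [ringJacobson_eq_maximalIdeal]
    exact Set.range_subset_iff.2 fun i => (x i).2
  · gcongr
    have : (Set.range fun i => (x i : R)).encard ≤ Nat.card ι := by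
      simpa [← Set.image_univ, ENat.card_eq_coe_natCard] using
        Set.encard_image_le (fun i => (x i : R)) Set.univ
    exact_mod_cast this

theorem isRegularLocalRing_quotient_span_range [IsRegularLocalRing R] {x : ι → maximalIdeal R}
    (hx : LinearIndependent (ResidueField R) fun i => (maximalIdeal R).toCotangent (x i)) :
    IsRegularLocalRing (R ⧸ Ideal.span (Set.range fun i => (x i : R))) ∧
      ringKrullDim (R ⧸ Ideal.span (Set.range fun i => (x i : R))) + Nat.card ι =
        ringKrullDim R := by
  have hle : Ideal.span (Set.range fun i => (x i : R)) ≤ maximalIdeal R :=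
    Ideal.span_le.2 (Set.range_subset_iff.2 fun i => (x i).2)
  have : Nontrivial (R ⧸ Ideal.span (Set.range fun i => (x i : R))) :=
    Ideal.Quotient.nontrivial_iff.2 (ne_top_of_le_ne_top (maximalIdeal.isMaximal R).ne_top hle)
  have : IsLocalRing (R ⧸ Ideal.span (Set.range fun i => (x i : R))) :=
    .of_surjective' (Ideal.Quotient.mk _) Ideal.Quotient.mk_surjective
  have hdim := ringKrullDim_le_ringKrullDim_quotient_span_range_add x
  have hrank : ((maximalIdeal (R ⧸ Ideal.span (Set.range fun i => (x i : R)))).spanFinrank :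
      WithBot ℕ∞) + Nat.card ι ≤ ringKrullDim R := by
    rw [← IsRegularLocalRing.spanFinrank_maximalIdeal]
    exact_mod_cast spanFinrank_maximalIdeal_quotient_add_card_le hx
  refine ⟨.of_spanFinrank_maximalIdeal_le _ ?_, hdim.antisymm' ?_⟩
  · exact ENat.WithBot.add_le_add_natCast_right_iff.1 (hrank.trans hdim)
  · grw [ringKrullDim_le_spanFinrank_maximalIdeal, hrank]

theorem isRegularLocalRing_quotient_span_singleton [IsRegularLocalRing R] {x : R}
    (hx : x ∈ maximalIdeal R) (hx2 : x ∉ maximalIdeal R ^ 2) :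
    IsRegularLocalRing (R ⧸ Ideal.span {x}) ∧
      ringKrullDim (R ⧸ Ideal.span {x}) + 1 = ringKrullDim R := by
  have hne : (maximalIdeal R).toCotangent ⟨x, hx⟩ ≠ 0 :=
    (Ideal.toCotangent_eq_zero _ _).not.2 hx2
  have hli : LinearIndependent (ResidueField R)
      fun _ : Unit => (maximalIdeal R).toCotangent ⟨x, hx⟩ := .of_subsingleton () hne
  have h := isRegularLocalRing_quotient_span_range hli
  rw [Set.range_const] at h
  simpa using h

theorem exists_mem_maximalIdeal_notMem_minimalPrimes [IsLocalRing R] [IsNoetherianRing R]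
    (hR : ringKrullDim R ≠ 0) :
    ∃ x ∈ maximalIdeal R, x ∉ maximalIdeal R ^ 2 ∧ ∀ p ∈ minimalPrimes R, x ∉ p := by
  have hmin : ∀ p ∈ minimalPrimes R, ¬ maximalIdeal R ≤ p := by
    intro p hp hle
    have hpm : p = maximalIdeal R := (le_maximalIdeal hp.1.1.ne_top).antisymm hle
    rw [hpm] at hp
    have : (maximalIdeal R).height = 0 := Ideal.height_eq_zero_iff.2 hp
    rw [← maximalIdeal_height_eq_ringKrullDim, this] at hR
    exact hR rfl
  by_contra! hcon
  obtain ⟨I, hI, hle⟩ := (Ideal.subset_union_prime_finite (f := id)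
    ((minimalPrimes.finite_of_isNoetherianRing R).insert (maximalIdeal R ^ 2))
    (maximalIdeal R ^ 2) (maximalIdeal R ^ 2) (I := maximalIdeal R)
    fun I hI hne _ => (hI.resolve_left hne).1.1).1 fun x hx => by
      by_cases hx2 : x ∈ maximalIdeal R ^ 2
      · exact Set.mem_biUnion (Set.mem_insert _ _) hx2
      · obtain ⟨p, hp, hxp⟩ := hcon x hx hx2
        exact Set.mem_biUnion (Set.mem_insert_of_mem _ hp) hxp
  rcases hI with rfl | hI
  · exact (maximalIdeal_sq_lt_of_ringKrullDim_ne_zero hR).not_ge hle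
  · exact hmin I hI hle

theorem exists_isRegularLocalRing_quotient_span_singleton [IsRegularLocalRing R] {d : ℕ}
    (hd : ringKrullDim R = (d + 1 : ℕ)) :
    ∃ x ∈ maximalIdeal R, (∀ p ∈ minimalPrimes R, x ∉ p) ∧
      IsRegularLocalRing (R ⧸ Ideal.span {x}) ∧ ringKrullDim (R ⧸ Ideal.span {x}) = d := by
  obtain ⟨x, hx, hx2, hxp⟩ := exists_mem_maximalIdeal_notMem_minimalPrimes (R := R) <| by
    rw [hd]
    exact_mod_cast d.succ_ne_zero
  obtain ⟨hreg, hdim⟩ := isRegularLocalRing_quotient_span_singleton hx hx2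
  refine ⟨x, hx, hxp, hreg, ENat.WithBot.add_one_cancel.1 ?_⟩
  rw [hdim, hd, Nat.cast_add_one]

theorem isDomain_of_isPrime_span_singleton [IsLocalRing R] [IsNoetherianRing R] {x : R}
    (hx : x ∈ maximalIdeal R) (hxp : ∀ p ∈ minimalPrimes R, x ∉ p)
    (hprime : (Ideal.span {x}).IsPrime) : IsDomain R := by
  obtain ⟨p, hp, hpx⟩ := Ideal.exists_minimalPrimes_le (I := (⊥ : Ideal R)) (J := .span {x}) bot_le
  have : p.IsPrime := hp.1.1
  have hxpp : p ≤ Ideal.span {x} • p := by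
    intro y hy
    obtain ⟨z, rfl⟩ := Ideal.mem_span_singleton.1 (hpx hy)
    exact Ideal.mul_mem_mul (Ideal.mem_span_singleton_self x)
      ((this.mem_or_mem hy).resolve_left (hxp p hp))
  have hx_jac : Ideal.span {x} ≤ Ideal.jacobson ⊥ :=
    ((Ideal.span_singleton_le_iff_mem _).2 hx).trans (maximalIdeal_le_jacobson _)
  have hpbot : p = ⊥ :=
    Submodule.eq_bot_of_le_smul_of_le_jacobson_bot _ _ (IsNoetherian.noetherian _) hxpp hx_jac
  subst hpbot
  exact IsDomain.of_bot_isPrime R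

theorem exists_ringKrullDim_eq_natCast (R : Type*) [CommRing R] [IsRegularLocalRing R] :
    ∃ d : ℕ, ringKrullDim R = d := ⟨_, IsRegularLocalRing.spanFinrank_maximalIdeal.symm⟩

theorem isDomain_of_isRegularLocalRing (R : Type*) [CommRing R] [IsRegularLocalRing R] :
    IsDomain R := by
  obtain ⟨d, hd⟩ := exists_ringKrullDim_eq_natCast R
  induction d generalizing R with
  | zero =>
    have hm := IsRegularLocalRing.spanFinrank_maximalIdeal (R := R)
    rw [hd, Nat.cast_inj,
      Submodule.spanFinrank_eq_zero_iff_eq_bot (IsNoetherian.noetherian _)] at hm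
    exact (isField_iff_maximalIdeal_eq.2 hm).isDomain
  | succ d ih =>
    obtain ⟨x, hx, hxp, hreg, hdim⟩ := exists_isRegularLocalRing_quotient_span_singleton hd
    exact isDomain_of_isPrime_span_singleton hx hxp
      ((Ideal.Quotient.isDomain_iff_prime _).1 (ih (R ⧸ Ideal.span {x}) hdim))

open RingTheory.Sequence Pointwise in
theorem exists_isRegular_length_eq_ringKrullDim (R : Type*) [CommRing R] [IsRegularLocalRing R] :
    ∃ rs : List R, (rs.length : WithBot ℕ∞) = ringKrullDim R ∧ (∀ r ∈ rs, r ∈ maximalIdeal R) ∧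
      IsRegular R rs := by
  obtain ⟨d, hd⟩ := exists_ringKrullDim_eq_natCast R
  induction d generalizing R with
  | zero => exact ⟨[], by simp [hd], by simp, IsRegular.nil R R⟩
  | succ d ih =>
    have := isDomain_of_isRegularLocalRing R
    obtain ⟨x, hx, hxp, hreg, hdim⟩ := exists_isRegularLocalRing_quotient_span_singleton hd
    obtain ⟨rs, hlen, hmem, hrs⟩ := ih (R ⧸ Ideal.span {x}) hdim
    obtain ⟨rs, rfl⟩ := List.map_surjective_iff.2 Ideal.Quotient.mk_surjective rs
    have hx0 : x ≠ 0 := by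
      rintro rfl
      exact hxp ⊥ (by simp [IsDomain.minimalPrimes_eq_singleton_bot]) rfl
    refine ⟨x :: rs, ?_, List.forall_mem_cons.2 ⟨hx, fun r hr => ?_⟩, ?_⟩
    · rw [hd, Nat.cast_inj, List.length_cons, Nat.add_right_cancel_iff]
      exact_mod_cast (List.length_map _).symm.trans (Nat.cast_injective (hlen.trans hdim))
    · exact (mem_maximalIdeal r).2 fun hu =>
        (mem_maximalIdeal _).1 (hmem _ (List.mem_map_of_mem hr)) (hu.map _)
    · rw [isRegular_cons_iff']
      refine ⟨fun a b hab => mul_left_cancel₀ hx0 hab, ?_⟩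
      have hQ : x • (⊤ : Submodule R R) = Ideal.span {x} := by
        rw [← Submodule.ideal_span_singleton_smul, smul_eq_mul, Ideal.mul_top]
      exact ((LinearEquiv.extendScalarsOfSurjective Ideal.Quotient.mk_surjective
          (Submodule.quotEquivOfEq _ _ hQ)).isRegular_congr _).2 hrs

end RegularLocalRing

section Depth

open RingTheory.Sequence CategoryTheory Abelian Pointwise

theorem subsingleton_linearMap_quotient_of_subsingleton_ext {R : Type u} [CommRing R]
    (N M : ModuleCat.{u} R) {gs : List R} (hgs : IsWeaklyRegular M gs)
    (hext : ∀ i ≤ gs.length, Subsingleton (Ext N M i)) :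
    Subsingleton (N →ₗ[R] (M ⧸ (Ideal.ofList gs • ⊤ : Submodule R M))) := by
  induction gs generalizing M with
  | nil =>
    have : Subsingleton (N →ₗ[R] M) :=
      (Ext.addEquiv₀.trans ModuleCat.homAddEquiv).symm.subsingleton_congr.2 (hext 0 le_rfl)
    have e : (M ⧸ (Ideal.ofList ([] : List R) • ⊤ : Submodule R M)) ≃ₗ[R] M :=
      Submodule.quotEquivOfEqBot _ (by rw [Ideal.ofList_nil, Submodule.bot_smul])
    exact e.congrRight.toEquiv.subsingleton
  | cons x gs ih =>
    rw [isWeaklyRegular_cons_iff] at hgs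
    have hext' (i : ℕ) (hi : i ≤ gs.length) :
        Subsingleton (Ext N (ModuleCat.of R (QuotSMulTop x M)) i) := by
      have hi₀ := AddCommGrpCat.isZero_of_iff_subsingleton.2 (hext i (Nat.le_succ_of_le hi))
      have hi₁ := AddCommGrpCat.isZero_of_iff_subsingleton.2 (hext (i + 1) (Nat.succ_le_succ hi))
      exact AddCommGrpCat.subsingleton_of_isZero <| ShortComplex.Exact.isZero_of_both_zeros
        (Ext.covariant_sequence_exact₃' N hgs.1.smulShortComplex_shortExact i (i + 1) rfl)
        (hi₀.eq_zero_of_src _) (hi₁.eq_zero_of_tgt _)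
    have := ih (ModuleCat.of R (QuotSMulTop x M)) hgs.2 hext'
    let e := Submodule.quotOfListConsSMulTopEquivQuotSMulTopInner M x gs
    exact e.congrRight.toEquiv.subsingleton

theorem subsingleton_ext_residueField {R : Type u} [CommRing R]
    [IsRegularLocalRing R] {i : ℕ} (hi : (i : WithBot ℕ∞) < ringKrullDim R) :
    Subsingleton (Ext (ModuleCat.of R (R ⧸ maximalIdeal R)) (ModuleCat.of R R) i) := by
  obtain ⟨rs, hlen, hmem, hrs⟩ := exists_isRegular_length_eq_ringKrullDim R
  rw [← hlen, Nat.cast_lt] at hi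
  refine ModuleCat.subsingleton_ext_of_exists_isRegular (maximalIdeal R) _ ?_ _ ?_ rs hmem hrs i hi
  · change Module.support R (R ⧸ maximalIdeal R) ⊆ _
    rw [Module.support_eq_zeroLocus, Ideal.annihilator_quotient]
  · change maximalIdeal R • (⊤ : Submodule R R) < ⊤
    simpa using (maximalIdeal.isMaximal R).ne_top.lt_top

theorem ringKrullDim_le_length_of_maximalIdeal_le_colon {R : Type u} [CommRing R]
    [IsRegularLocalRing R] {gs : List R} (hgs : IsWeaklyRegular R gs) {x : R}
    (hx : x ∉ Ideal.ofList gs) (hmx : ∀ y ∈ maximalIdeal R, y * x ∈ Ideal.ofList gs) :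
    ringKrullDim R ≤ gs.length := by
  by_contra! hlt
  have hhom := subsingleton_linearMap_quotient_of_subsingleton_ext
    (ModuleCat.of R (R ⧸ maximalIdeal R)) (ModuleCat.of R R) hgs fun i hi =>
      subsingleton_ext_residueField
        ((Nat.cast_le.2 hi).trans_lt hlt)
  let f : (R ⧸ maximalIdeal R) →ₗ[R] R ⧸ (Ideal.ofList gs • ⊤ : Submodule R R) :=
    Submodule.liftQ _ ((Submodule.mkQ _).comp (LinearMap.toSpanSingleton R R x)) fun y hy =>
      (Submodule.Quotient.mk_eq_zero _).2 (by simpa using hmx y hy)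
  have hf : f (Submodule.Quotient.mk 1) = 0 := DFunLike.congr_fun (hhom.elim f 0) _
  have hf' : (1 : R) • x ∈ (Ideal.ofList gs • ⊤ : Submodule R R) :=
    (Submodule.Quotient.mk_eq_zero _).1 hf
  exact hx (by simpa using hf')

end Depth

theorem le_height_iff_forall_isPrime {A : Type*} [CommRing A] {I : Ideal A} {n : ℕ∞} :
    n ≤ I.height ↔ ∀ P : Ideal A, P.IsPrime → I ≤ P → n ≤ P.height := by
  refine ⟨fun h P _ hIP => h.trans (Ideal.height_mono hIP), fun h => ?_⟩
  rw [Ideal.height_eq_inf_minimalPrimes]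
  exact le_iInf₂ fun P hP => h P hP.isPrime hP.le

section Unmixedness

open RingTheory.Sequence

theorem isWeaklyRegular_append_singleton_iff {A : Type*} [CommRing A] {gs : List A} {a : A} :
    IsWeaklyRegular A (gs ++ [a]) ↔
      IsWeaklyRegular A gs ∧ IsSMulRegular (A ⧸ Ideal.ofList gs) a := by
  rw [isWeaklyRegular_append_iff, isWeaklyRegular_singleton_iff,
    isSMulRegular_quotient_iff_mem_of_smul_mem, smul_eq_mul, Ideal.mul_top,
    isSMulRegular_quotient_iff_mem_of_smul_mem]

variable {A : Type u} [CommRing A] [IsRegularRing A] {gs : List A}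

theorem height_le_length_of_mem_associatedPrimes (hgs : IsWeaklyRegular A gs) {P : Ideal A}
    (hP : P ∈ associatedPrimes A (A ⧸ Ideal.ofList gs)) : P.height ≤ gs.length := by
  have := hP.1
  obtain ⟨-, x, hx⟩ := isAssociatedPrime_iff.1 hP
  obtain ⟨x, rfl⟩ := Ideal.Quotient.mk_surjective x
  have hmem (y : A) : y ∈ P ↔ y * x ∈ Ideal.ofList gs := by
    rw [hx, Submodule.mem_colon_singleton, Submodule.mem_bot, Algebra.smul_def,
      Ideal.Quotient.algebraMap_eq, ← map_mul, Ideal.Quotient.eq_zero_iff_mem]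
  let φ := algebraMap A (Localization.AtPrime P)
  have hφx : φ x ∉ (Ideal.ofList gs).map φ := by
    rw [IsLocalization.algebraMap_mem_map_algebraMap_iff P.primeCompl]
    rintro ⟨m, hm, hmx⟩
    exact hm ((hmem m).2 hmx)
  have hmax : maximalIdeal (Localization.AtPrime P) ≤ ((Ideal.ofList gs).map φ).colon {φ x} := by
    rw [← Localization.AtPrime.map_eq_maximalIdeal, Ideal.map_le_iff_le_comap]
    intro z hz
    rw [Ideal.mem_comap, Submodule.mem_colon_singleton, smul_eq_mul, ← map_mul]
    exact Ideal.mem_map_of_mem _ ((hmem z).1 hz)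
  rw [Ideal.map_ofList] at hφx hmax
  have hdim := ringKrullDim_le_length_of_maximalIdeal_le_colon
    (hgs.of_isLocalization (Localization.AtPrime P) P.primeCompl) hφx
    fun y hy => Submodule.mem_colon_singleton.1 (hmax hy)
  rw [List.length_map, IsLocalization.AtPrime.ringKrullDim_eq_height P] at hdim
  exact_mod_cast hdim

theorem isSMulRegular_quotient_ofList (hgs : IsWeaklyRegular A gs) {a : A}
    (ha : gs.length < (Ideal.ofList (gs ++ [a])).height) :
    IsSMulRegular (A ⧸ Ideal.ofList gs) a := by
  by_contra hreg
  have hmem : a ∈ ⋃ P ∈ associatedPrimes A (A ⧸ Ideal.ofList gs), (P : Set A) := by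
    rw [biUnion_associatedPrimes_eq_compl_regular]
    exact hreg
  obtain ⟨P, hP, haP⟩ := Set.mem_iUnion₂.1 hmem
  have hgsP : Ideal.ofList gs ≤ P := by
    simpa [Submodule.annihilator_top, Ideal.annihilator_quotient] using hP.annihilator_le
  have hle : Ideal.ofList (gs ++ [a]) ≤ P := by
    rw [Ideal.ofList_append, Ideal.ofList_singleton]
    exact sup_le hgsP ((Ideal.span_singleton_le_iff_mem _).2 haP)
  exact ha.not_ge ((Ideal.height_mono hle).trans (height_le_length_of_mem_associatedPrimes hgs hP))

theorem exists_mem_isSMulRegular_quotient_ofList (hgs : IsWeaklyRegular A gs) {K : Ideal A}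
    (hK : gs.length < K.height) : ∃ a ∈ K, IsSMulRegular (A ⧸ Ideal.ofList gs) a := by
  by_contra! hreg
  have hsub : (K : Set A) ⊆ ⋃ P ∈ associatedPrimes A (A ⧸ Ideal.ofList gs), (P : Set A) := by
    rw [biUnion_associatedPrimes_eq_compl_regular]
    exact hreg
  obtain ⟨P, hP, hKP⟩ := (Ideal.subset_union_prime_finite (associatedPrimes.finite A _)
    (f := id) ⊥ ⊥ fun P hP _ _ => hP.1).1 hsub
  exact hK.not_ge ((Ideal.height_mono hKP).trans (height_le_length_of_mem_associatedPrimes hgs hP))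

end Unmixedness

section Connectedness

open RingTheory.Sequence

theorem isSMulRegular_quotient_iff {A : Type*} [CommRing A] {I : Ideal A} {a : A} :
    IsSMulRegular (A ⧸ I) a ↔ ∀ x, a * x ∈ I → x ∈ I :=
  isSMulRegular_quotient_iff_mem_of_smul_mem I a

variable {A : Type u} [CommRing A] [IsRegularRing A] {gs : List A}

theorem exists_idempotent_of_mul_le {J₁ J₂ : Ideal A} (hgs : IsWeaklyRegular A gs)
    (hmul : J₁ * J₂ ≤ Ideal.ofList gs) (hsup : (gs.length + 2 : ℕ) ≤ (J₁ ⊔ J₂).height) :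
    ∃ c, c * (1 - c) ∈ Ideal.ofList gs ∧ (∀ z ∈ J₂, c * z ∈ Ideal.ofList gs) ∧
      ∀ w ∈ J₁, (1 - c) * w ∈ Ideal.ofList gs := by
  have hmul' {u v : A} (hu : u ∈ J₁) (hv : v ∈ J₂) : u * v ∈ Ideal.ofList gs :=
    hmul (Ideal.mul_mem_mul hu hv)
  obtain ⟨a, haJ, ha⟩ := exists_mem_isSMulRegular_quotient_ofList hgs (K := J₁ ⊔ J₂)
    (lt_of_lt_of_le (by norm_cast; lia) hsup)
  obtain ⟨b, hbJ, hb⟩ := exists_mem_isSMulRegular_quotient_ofList (K := J₁ ⊔ J₂)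
    (isWeaklyRegular_append_singleton_iff.2 ⟨hgs, ha⟩)
    (lt_of_lt_of_le (by rw [List.length_append, List.length_singleton]; norm_cast; lia) hsup)
  rw [isSMulRegular_quotient_iff, Ideal.ofList_append, Ideal.ofList_singleton] at hb
  rw [isSMulRegular_quotient_iff] at ha
  set I := Ideal.ofList gs
  obtain ⟨a₁, ha₁, a₂, ha₂, rfl⟩ := Submodule.mem_sup.1 haJ
  obtain ⟨b₁, hb₁, b₂, hb₂, rfl⟩ := Submodule.mem_sup.1 hbJ
  -- The idempotent is `a₁ / (a₁ + a₂)`; the division is possible because `b₁ + b₂` is regular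
  -- modulo `a₁ + a₂`.
  have hba : (b₁ + b₂) * a₁ ∈ I ⊔ Ideal.span {a₁ + a₂} := by
    have : (b₁ + b₂) * a₁ = (a₁ * b₂ - b₁ * a₂) + b₁ * (a₁ + a₂) := by ring
    rw [this]
    exact add_mem (Ideal.mem_sup_left (sub_mem (hmul' ha₁ hb₂) (hmul' hb₁ ha₂)))
      (Ideal.mem_sup_right (Ideal.mul_mem_left _ _ (Ideal.mem_span_singleton_self _)))
  obtain ⟨i, hi, t, ht, hit⟩ := Submodule.mem_sup.1 (hb _ hba)
  obtain ⟨c, rfl⟩ := Ideal.mem_span_singleton'.1 ht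
  have hcJ₂ : ∀ z ∈ J₂, c * z ∈ I := fun z hz => ha _ <| by
    have : (a₁ + a₂) * (c * z) = a₁ * z - z * i := by linear_combination z * hit
    rw [this]
    exact sub_mem (hmul' ha₁ hz) (I.mul_mem_left _ hi)
  have hcJ₁ : ∀ w ∈ J₁, (1 - c) * w ∈ I := fun w hw => ha _ <| by
    have : (a₁ + a₂) * ((1 - c) * w) = w * a₂ + w * i := by linear_combination -w * hit
    rw [this]
    exact add_mem (hmul' hw ha₂) (I.mul_mem_left _ hi)
  refine ⟨c, ha _ ?_, hcJ₂, hcJ₁⟩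
  have : (a₁ + a₂) * (c * (1 - c)) = c * ((1 - c) * a₁) + (1 - c) * (c * a₂) := by ring
  rw [this]
  exact add_mem (I.mul_mem_left _ (hcJ₁ _ ha₁)) (I.mul_mem_left _ (hcJ₂ _ ha₂))

theorem le_or_le_of_mul_le {J₁ J₂ : Ideal A} (hgs : IsWeaklyRegular A gs)
    (hconn : ∀ c, c * (1 - c) ∈ Ideal.ofList gs → c ∈ Ideal.ofList gs ∨ 1 - c ∈ Ideal.ofList gs)
    (hmul : J₁ * J₂ ≤ Ideal.ofList gs) (hsup : (gs.length + 2 : ℕ) ≤ (J₁ ⊔ J₂).height) :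
    J₁ ≤ Ideal.ofList gs ∨ J₂ ≤ Ideal.ofList gs := by
  obtain ⟨c, hc, hcJ₂, hcJ₁⟩ := exists_idempotent_of_mul_le hgs hmul hsup
  refine (hconn c hc).imp (fun hc w hw => ?_) fun hc z hz => ?_
  · have : w = w * c + (1 - c) * w := by ring
    rw [this]
    exact add_mem (Ideal.mul_mem_left _ _ hc) (hcJ₁ w hw)
  · have : z = z * (1 - c) + c * z := by ring
    rw [this]
    exact add_mem (Ideal.mul_mem_left _ _ hc) (hcJ₂ z hz)

theorem exists_notMem_forall_mul_mem_of_map_le {A : Type*} [CommRing A] {I J p : Ideal A}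
    [p.IsPrime] (hJ : J.FG)
    (h : J.map (algebraMap A (Localization.AtPrime p)) ≤
      I.map (algebraMap A (Localization.AtPrime p))) :
    ∃ s ∉ p, ∀ x ∈ J, s * x ∈ I := by
  classical
  obtain ⟨S, rfl⟩ := hJ
  have hS (w : S) : ∃ s ∉ p, s * w ∈ I :=
    (IsLocalization.algebraMap_mem_map_algebraMap_iff p.primeCompl _ _ _).1
      (h (Ideal.mem_map_of_mem _ (Ideal.subset_span w.2)))
  choose s hs hsI using hS
  refine ⟨∏ w, s w, fun hp => ?_, fun x hx => ?_⟩
  · obtain ⟨w, -, hw⟩ := (Ideal.IsPrime.prod_mem_iff (p := p)).1 hp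
    exact hs w hw
  · rw [mul_comm, ← smul_eq_mul, ← Submodule.mem_colon_singleton]
    refine Ideal.span_le.2 (fun w hw => ?_) hx
    rw [SetLike.mem_coe, Submodule.mem_colon_singleton, smul_eq_mul, mul_comm]
    exact I.mem_of_dvd (mul_dvd_mul_right (Finset.dvd_prod_of_mem s (Finset.mem_univ ⟨w, hw⟩)) w)
      (hsI ⟨w, hw⟩)

theorem isPrime_ofList_of_isPrime_map (hgs : IsWeaklyRegular A gs) (hne : Ideal.ofList gs ≠ ⊤)
    (hconn : ∀ c, c * (1 - c) ∈ Ideal.ofList gs → c ∈ Ideal.ofList gs ∨ 1 - c ∈ Ideal.ofList gs)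
    (hloc : ∀ (p : Ideal A) [p.IsPrime], Ideal.ofList gs ≤ p → p.height < (gs.length + 2 : ℕ) →
      ((Ideal.ofList gs).map (algebraMap A (Localization.AtPrime p))).IsPrime) :
    (Ideal.ofList gs).IsPrime := by
  refine ⟨hne, fun {x y} hxy => ?_⟩
  set I := Ideal.ofList gs
  let J₁ := I.colon {x}
  let J₂ := I.colon (J₁ : Set A)
  have hJ₁ {z : A} : z ∈ J₁ ↔ z * x ∈ I := Submodule.mem_colon_singleton
  have hJ₂ {z : A} : z ∈ J₂ ↔ ∀ w ∈ J₁, z * w ∈ I := Submodule.mem_colon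
  have hI₁ : I ≤ J₁ := fun z hz => hJ₁.2 (I.mul_mem_right _ hz)
  have hmul : J₁ * J₂ ≤ I := Ideal.mul_le.2 fun w hw z hz => mul_comm z w ▸ hJ₂.1 hz w hw
  have hsup : (gs.length + 2 : ℕ) ≤ (J₁ ⊔ J₂).height := by
    refine le_height_iff_forall_isPrime.2 fun P _ hP => ?_
    have hJ₁P : J₁ ≤ P := le_sup_left.trans hP
    by_contra! hlt
    let φ := algebraMap A (Localization.AtPrime P)
    have hprime := hloc P (hI₁.trans hJ₁P) hlt
    have hxI : φ x ∉ I.map φ := fun hx => by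
      obtain ⟨s, hs, hsx⟩ :=
        (IsLocalization.algebraMap_mem_map_algebraMap_iff P.primeCompl _ _ _).1 hx
      exact hs (hJ₁P (hJ₁.2 hsx))
    have hle : J₁.map φ ≤ I.map φ := Ideal.map_le_iff_le_comap.2 fun w hw =>
      (hprime.mem_or_mem (map_mul φ w x ▸ Ideal.mem_map_of_mem φ (hJ₁.1 hw))).resolve_right hxI
    obtain ⟨s, hs, hsJ⟩ := exists_notMem_forall_mul_mem_of_map_le (IsNoetherian.noetherian J₁) hle
    exact hs (hP (Ideal.mem_sup_right (hJ₂.2 hsJ)))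
  refine (le_or_le_of_mul_le hgs hconn hmul hsup).symm.imp (fun h => h ?_) fun h => h ?_
  · exact hJ₂.2 fun w hw => mul_comm w x ▸ hJ₁.1 hw
  · exact hJ₁.2 (mul_comm x y ▸ hxy)

theorem ofList_ofFn {R : Type*} [CommRing R] {k : ℕ} (q : Fin k → R) :
    Ideal.ofList (List.ofFn q) = Ideal.span (Set.range q) := by
  simp only [Ideal.ofList, List.mem_ofFn]
  rfl

theorem isWeaklyRegular_ofFn {k : ℕ} {q : Fin k → A}
    (hq : ∀ j (hj : j ≤ k), (j : ℕ∞) ≤ (Ideal.span (Set.range (q ∘ Fin.castLE hj))).height) :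
    IsWeaklyRegular A (List.ofFn q) := by
  induction k with
  | zero => simp
  | succ k ih =>
    have hinit := ih (q := q ∘ Fin.castSucc) fun j hj => hq j (hj.trans k.le_succ)
    have happend : List.ofFn q = List.ofFn (q ∘ Fin.castSucc) ++ [q (Fin.last k)] := by
      rw [List.ofFn_succ', List.concat_eq_append]
      rfl
    have hlast : ((k + 1 : ℕ) : ℕ∞) ≤ (Ideal.ofList (List.ofFn q)).height := by
      rw [ofList_ofFn]
      exact hq (k + 1) le_rfl
    rw [happend, isWeaklyRegular_append_singleton_iff]
    refine ⟨hinit, isSMulRegular_quotient_ofList hinit (lt_of_lt_of_le ?_ (happend ▸ hlast))⟩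
    rw [List.length_ofFn]
    exact_mod_cast k.lt_succ_self

end Connectedness

theorem ringKrullDim_quotient_add_height_le {A : Type*} [CommRing A] (J : Ideal A) :
    ringKrullDim (A ⧸ J) + J.height ≤ ringKrullDim A := by
  obtain rfl | hJ := eq_or_ne J ⊤
  · simp [ringKrullDim_eq_bot_of_subsingleton]
  have : Nonempty (PrimeSpectrum.zeroLocus (J : Set A)) := by
    rwa [Set.nonempty_coe_sort, Set.nonempty_iff_ne_empty, ne_eq,
      PrimeSpectrum.zeroLocus_empty_iff_eq_top]
  have : Nonempty (PrimeSpectrum A) := this.map Subtype.val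
  rw [ringKrullDim_quotient, Order.krullDim_eq_iSup_length, ringKrullDim,
    Order.krullDim_eq_iSup_height_add_coheight_of_nonempty, ← WithBot.coe_add, ENat.iSup_add,
    WithBot.coe_le_coe, iSup_le_iff]
  intro s
  rw [add_comm]
  refine le_iSup_of_le (s.head : PrimeSpectrum A) (add_le_add ?_ ?_)
  · exact (Ideal.height_mono s.head.2).trans_eq (PrimeSpectrum.height_eq_orderHeight _)
  · exact Order.length_le_coheight (p := s.map Subtype.val fun _ _ => id) le_rfl

section HeightAndTranscendenceDegree

open scoped Polynomial
open Cardinal (toENat)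

theorem trdeg_polynomial_quotient_map_C (k : Type*) {R : Type*} [Field k] [CommRing R]
    [Algebra k R] (p : Ideal R) [p.IsPrime] :
    Algebra.trdeg k (R[X] ⧸ p.map (Polynomial.C : R →+* R[X])) = Algebra.trdeg k (R ⧸ p) + 1 := by
  let e : (R ⧸ p)[X] ≃ₐ[k] R[X] ⧸ p.map (Polynomial.C : R →+* R[X]) :=
    AlgEquiv.ofRingEquiv (f := p.polynomialQuotientEquivQuotientPolynomial) fun r => by
      have := p.polynomialQuotientEquivQuotientPolynomial_map_mk (Polynomial.C (algebraMap k R r))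
      rwa [Polynomial.map_C] at this
  rw [← e.trdeg_eq, ← _root_.trdeg_add_eq k (R ⧸ p), Polynomial.trdeg_of_isDomain]

theorem height_le_height_map_C {R : Type*} [CommRing R] [IsNoetherianRing R] (p : Ideal R)
    [p.IsPrime] : p.height ≤ (p.map (Polynomial.C : R →+* R[X])).height := by
  have := Ideal.isPrime_map_C_of_isPrime (P := p)
  have : (p.map (Polynomial.C : R →+* R[X])).LiesOver p := ⟨by
    ext x
    simp [Ideal.under, Ideal.mem_map_C_iff, Polynomial.coeff_C, apply_ite, forall_eq]⟩
  rw [Ideal.height_eq_height_add_of_liesOver_of_hasGoingDown p (p.map Polynomial.C)]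
  exact le_self_add

theorem add_one_le_height_add_trdeg {k R : Type*} [Field k] [CommRing R] [IsNoetherianRing R]
    [Algebra k R] {n : ℕ∞}
    (hR : ∀ (p : Ideal R) [p.IsPrime], n ≤ p.height + toENat (Algebra.trdeg k (R ⧸ p)))
    (P : Ideal R[X]) [P.IsPrime] : n + 1 ≤ P.height + toENat (Algebra.trdeg k (R[X] ⧸ P)) := by
  let p : Ideal R := P.comap Polynomial.C
  have hp := Ideal.isPrime_map_C_of_isPrime (P := p)
  have hle : p.map Polynomial.C ≤ P := Ideal.map_comap_le
  obtain heq | hlt := hle.eq_or_lt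
  · calc n + 1 ≤ p.height + toENat (Algebra.trdeg k (R ⧸ p)) + 1 := by gcongr; exact hR p
      _ = p.height + toENat (Algebra.trdeg k (R[X] ⧸ P)) := by
        rw [← heq, trdeg_polynomial_quotient_map_C, map_add, map_one, add_assoc]
      _ ≤ _ := by
        gcongr
        exact (height_le_height_map_C p).trans (Ideal.height_mono hle)
  · have htrdeg : Algebra.trdeg k (R ⧸ p) ≤ Algebra.trdeg k (R[X] ⧸ P) :=
      trdeg_le_of_injective
        (Ideal.quotientMapₐ P (Polynomial.CAlgHom (R := k) (A := R)) le_rfl)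
        (Ideal.quotientMap_injective (I := P) (f := Polynomial.C))
    calc n + 1 ≤ p.height + toENat (Algebra.trdeg k (R ⧸ p)) + 1 := by gcongr; exact hR p
      _ ≤ p.height + toENat (Algebra.trdeg k (R[X] ⧸ P)) + 1 := by gcongr
      _ = p.height + 1 + toENat (Algebra.trdeg k (R[X] ⧸ P)) := add_right_comm _ _ _
      _ ≤ _ := by
        gcongr
        exact (add_le_add_left (height_le_height_map_C p) 1).trans
          (Ideal.height_add_one_le_of_lt_of_isPrime hlt)

theorem height_comap_add_trdeg {k : Type*} {A B : Type u} [Field k] [CommRing A] [CommRing B]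
    [Algebra k A] [Algebra k B] (e : A ≃ₐ[k] B) (P : Ideal B) :
    (P.comap e).height + toENat (Algebra.trdeg k (A ⧸ P.comap e)) =
      P.height + toENat (Algebra.trdeg k (B ⧸ P)) := by
  have hmap : P = (P.comap e).map (e : A →+* B) :=
    (Ideal.map_comap_of_surjective e e.surjective P).symm
  rw [(Ideal.quotientEquivAlg (P.comap e) P e hmap).trdeg_eq]
  congr 1
  exact RingEquiv.height_comap e.toRingEquiv P

theorem card_le_height_add_trdeg (k : Type*) [Field k] (σ : Type*) [Finite σ]
    (P : Ideal (MvPolynomial σ k)) [P.IsPrime] :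
    (Nat.card σ : ℕ∞) ≤ P.height + toENat (Algebra.trdeg k (MvPolynomial σ k ⧸ P)) := by
  induction σ using Finite.induction_empty_option with
  | @of_equiv σ τ e ih =>
    rw [← Nat.card_congr e, ← height_comap_add_trdeg (renameEquiv k e)]
    exact ih _
  | h_empty => simp
  | @h_option σ _ ih =>
    rw [Finite.card_option, Nat.cast_succ, ← height_comap_add_trdeg (optionEquivLeft k σ).symm]
    exact add_one_le_height_add_trdeg (fun p _ => ih p) _

end HeightAndTranscendenceDegree

section Minors

variable {K m n : Type*} [Field K]

theorem exists_linearIndependent_col_submatrix [Fintype n] {M : Matrix m n K} {r : ℕ}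
    (hr : r ≤ M.rank) :
    ∃ g : Fin r → n, LinearIndependent K (M.submatrix id g).col := by
  have := Module.Finite.span_of_finite K (Set.finite_range M.col)
  obtain ⟨f, hf, -, hli⟩ := Submodule.exists_fun_fin_finrank_span_eq K (Set.range M.col)
  rw [Matrix.rank_eq_finrank_span_cols] at hr
  choose g hg using hf
  refine ⟨g ∘ Fin.castLE hr, ?_⟩
  have hcol : (M.submatrix id (g ∘ Fin.castLE hr)).col = f ∘ Fin.castLE hr :=
    funext fun i => hg _
  exact hcol ▸ hli.comp _ (Fin.castLE_injective hr)

theorem le_rank_iff_exists_det_submatrix_ne_zero [Finite m] [Fintype n] {M : Matrix m n K} {r : ℕ} :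
    r ≤ M.rank ↔ ∃ (f : Fin r → m) (g : Fin r → n), (M.submatrix f g).det ≠ 0 := by
  have := Fintype.ofFinite m
  refine ⟨fun hr => ?_, fun ⟨f, g, hdet⟩ => ?_⟩
  · obtain ⟨g, hg⟩ := exists_linearIndependent_col_submatrix hr
    have hrank : (M.submatrix id g).transpose.rank = r := by
      rw [hg.rank_matrix (M := (M.submatrix id g).transpose), Fintype.card_fin]
    obtain ⟨f, hf⟩ := exists_linearIndependent_col_submatrix hrank.ge
    have hunit := Matrix.linearIndependent_cols_iff_isUnit.1 hf
    rw [Matrix.isUnit_iff_isUnit_det, ← Matrix.det_transpose] at hunit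
    exact ⟨f, g, hunit.ne_zero⟩
  · calc r = (M.submatrix f g).rank := by rw [Matrix.rank_of_det_ne_zero hdet, Fintype.card_fin]
      _ ≤ M.rank := M.rank_submatrix_le f g

theorem exists_ne_zero_vecMul_eq_zero [Fintype m] [DecidableEq m] [Finite n]
    {M : Matrix m n K} (hM : ∀ g : m → n, (M.submatrix id g).det = 0) :
    ∃ c ≠ 0, Matrix.vecMul c M = 0 := by
  have := Fintype.ofFinite n
  suffices ¬ LinearIndependent K M.row by
    obtain ⟨c, hc, i, hi⟩ := Fintype.not_linearIndependent_iff.1 this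
    refine ⟨c, fun h => hi (congrFun h i), ?_⟩
    rwa [Matrix.vecMul_eq_sum]
  intro hli
  obtain ⟨g, hg⟩ := exists_linearIndependent_col_submatrix hli.rank_matrix.ge
  have hunit := Matrix.linearIndependent_cols_iff_isUnit (A := M.submatrix id (g ∘ _)).1
    (hg.comp _ (Fintype.equivFin m).injective)
  rw [Matrix.isUnit_iff_isUnit_det] at hunit
  exact hunit.ne_zero (hM (g ∘ Fintype.equivFin m))

end Minors

section MinRank

variable {ι m n : Type*} [Fintype ι]

/-- The tuple rank of `B` is at least `r`: every nontrivial linear combination of the matrices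
`B i` has rank at least `r`. -/
def MinRankGE {R : Type*} [Fintype n] [CommRing R] (r : ℕ) (B : ι → Matrix m n R) : Prop :=
  ∀ c : ι → R, c ≠ 0 → r ≤ (∑ i, c i • B i).rank

theorem MinRankGE.comp {R κ : Type*} [CommRing R] [Fintype n] [Fintype κ]
    {B : ι → Matrix m n R} {r : ℕ} (hB : MinRankGE r B) {f : κ → ι} (hf : f.Injective) :
    MinRankGE r (B ∘ f) := by
  classical
  intro c hc
  have hext : Function.extend f c 0 ≠ 0 := fun h => hc <| by
    rw [← Function.extend_comp hf c 0, h, Pi.zero_comp]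
  convert hB _ hext using 2
  exact Finset.sum_of_injOn f hf.injOn (by simp)
    (fun i _ hi => by
      rw [Function.extend_apply' _ _ _ (by simpa using hi), Pi.zero_apply, zero_smul])
    (fun j _ => by rw [hf.extend_apply, Function.comp_apply])

/-- The linear combination of the matrices `B i` with indeterminate coefficients, used to express
the minors of all combinations at once as polynomials in their coefficients. -/
noncomputable def genericCombination {R : Type*} [CommRing R] (B : ι → Matrix m n R) :
    Matrix m n (MvPolynomial ι R) :=
  ∑ i, (X i : MvPolynomial ι R) • (B i).map C

theorem aeval_det_submatrix_genericCombination {R S κ : Type*} [CommRing R] [CommRing S]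
    [Algebra R S] [Fintype κ] [DecidableEq κ] (B : ι → Matrix m n R) (f : κ → m) (g : κ → n)
    (c : ι → S) :
    aeval c ((genericCombination B).submatrix f g).det =
      ((∑ i, c i • (B i).map (algebraMap R S)).submatrix f g).det := by
  rw [AlgHom.map_det]
  congr 1
  ext a b
  simp [genericCombination, Matrix.sum_apply]

variable {K L : Type*} [Field K] [IsAlgClosed K] [Field L] [Algebra K L]

theorem MinRankGE.map [Finite m] [Fintype n] {B : ι → Matrix m n K} {r : ℕ} (hB : MinRankGE r B) :
    MinRankGE r fun i => (B i).map (algebraMap K L) := by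
  intro c hc
  obtain ⟨i₀, hi₀⟩ := Function.ne_iff.1 hc
  by_contra hlt
  simp only [le_rank_iff_exists_det_submatrix_ne_zero, not_exists, not_not] at hlt
  let P := RingHom.ker (aeval c : MvPolynomial ι K →ₐ[K] L)
  have hX : X i₀ ∉ vanishingIdeal K (zeroLocus K P) := by
    have : P.IsPrime := RingHom.ker_isPrime _
    rw [IsPrime.vanishingIdeal_zeroLocus]
    simpa [P, RingHom.mem_ker] using hi₀
  obtain ⟨z, hz, hz₀⟩ : ∃ z ∈ zeroLocus K P, aeval z (X i₀) ≠ (0 : K) := by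
    simpa only [mem_vanishingIdeal_iff, not_forall, exists_prop] using hX
  obtain ⟨f, g, hfg⟩ := le_rank_iff_exists_det_submatrix_ne_zero.1
    (hB z fun h => hz₀ (by simp [h]))
  refine hfg ?_
  have hminor : ((genericCombination B).submatrix f g).det ∈ P := by
    rw [RingHom.mem_ker, aeval_det_submatrix_genericCombination, hlt f g]
  simpa [aeval_det_submatrix_genericCombination] using hz _ hminor

end MinRank

section TranscendenceDegree

open Cardinal (toENat)

variable {F : Type*} [Field F]

theorem finrank_span_add_rank_le_card {L m n : Type*} [Field L] [Algebra L F] [Finite m]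
    [Fintype n] {M : Matrix m n L} {x : n → F} (hx : (M.map (algebraMap L F)).mulVec x = 0) :
    Module.finrank L (Submodule.span L (Set.range x)) + M.rank ≤ Fintype.card n := by
  have hrow : Submodule.span L (Set.range M.row) ≤ (Fintype.linearCombination L x).ker := by
    rw [Submodule.span_le]
    rintro _ ⟨i, rfl⟩
    simpa [Fintype.linearCombination_apply, Matrix.mulVec, dotProduct, Algebra.smul_def] using
      congrFun hx i
  rw [← Fintype.range_linearCombination, M.rank_eq_finrank_span_row, ← Module.finrank_pi (R := L),
    ← (Fintype.linearCombination L x).finrank_range_add_finrank_ker]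
  exact Nat.add_le_add_left (Submodule.finrank_mono hrow) _

theorem trdeg_le_card_add_finrank_span {K : Type*} [Field K] [Algebra K F] {S T : Set F}
    (hT : T.Finite) (htop : IntermediateField.adjoin (IntermediateField.adjoin K S) T = ⊤) :
    Algebra.trdeg K F ≤ Cardinal.mk S +
      Module.finrank (IntermediateField.adjoin K S)
        (Submodule.span (IntermediateField.adjoin K S) T) := by
  set L := IntermediateField.adjoin K S
  have := Module.Finite.span_of_finite L hT
  obtain ⟨b, -, hb, -⟩ := Submodule.exists_fun_fin_finrank_span_eq L T
  have hTb : T ⊆ IntermediateField.adjoin L (Set.range b) := by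
    change T ⊆ (IntermediateField.adjoin L (Set.range b)).toSubalgebra.toSubmodule
    rw [← Submodule.span_le]
    exact hb.ge.trans (Submodule.span_le.2 (IntermediateField.subset_adjoin L _))
  have hadjoin : IntermediateField.adjoin K (S ∪ Set.range b) = ⊤ := by
    rw [← IntermediateField.adjoin_adjoin_left,
      top_unique (htop.ge.trans (IntermediateField.adjoin_le_iff.2 hTb)),
      IntermediateField.restrictScalars_top]
  have : Algebra.IsAlgebraic (Algebra.adjoin K (S ∪ Set.range b)) F := by
    rw [← IntermediateField.isAlgebraic_adjoin_iff_top, hadjoin]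
    infer_instance
  calc Algebra.trdeg K F ≤ Cardinal.mk ↑(S ∪ Set.range b) :=
        Algebra.IsAlgebraic.trdeg_le_cardinalMk K _
    _ ≤ Cardinal.mk S + Cardinal.mk (Set.range b) := Cardinal.mk_union_le _ _
    _ ≤ _ := by
      gcongr
      simpa using Cardinal.mk_range_le_lift (f := b)

theorem adjoin_eq_top_of_adjoin_eq_top {K : Type*} [Field K] [Algebra K F]
    (L : IntermediateField K F) {S : Set F} (hS : IntermediateField.adjoin K S = ⊤) :
    IntermediateField.adjoin L S = ⊤ := by
  have hle : IntermediateField.adjoin K S ≤ (IntermediateField.adjoin L S).restrictScalars K :=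
    IntermediateField.adjoin_le_iff.2 (IntermediateField.subset_adjoin L S)
  exact top_unique fun y _ => hle (hS ▸ IntermediateField.mem_top)

variable {K ι m n : Type*} [Field K] [IsAlgClosed K] [Algebra K F] [Fintype ι] [Finite m]
  [Fintype n] {B : ι → Matrix m n K} {r : ℕ} {x : n → F}

theorem MinRankGE.finrank_span_add_le (hB : MinRankGE r B) {L : Type*} [Field L] [Algebra K L]
    [Algebra L F] [IsScalarTower K L F] {c : ι → L} (hc : c ≠ 0)
    (hcx : (∑ i, algebraMap L F (c i) • (B i).map (algebraMap K F)).mulVec x = 0) :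
    Module.finrank L (Submodule.span L (Set.range x)) + r ≤ Fintype.card n := by
  have hmap : (∑ i, c i • (B i).map (algebraMap K L)).map (algebraMap L F) =
      ∑ i, algebraMap L F (c i) • (B i).map (algebraMap K F) := by
    ext a b
    simp [Matrix.sum_apply, ← IsScalarTower.algebraMap_apply, Algebra.smul_def]
  exact (Nat.add_le_add_left (hB.map c hc) _).trans
    (finrank_span_add_rank_le_card (hmap ▸ hcx))

theorem MinRankGE.trdeg_add_le (hB : MinRankGE r B)
    (hx : IntermediateField.adjoin K (Set.range x) = ⊤) {c : ι → F} (hc : c ≠ 0)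
    (hcx : (∑ i, c i • (B i).map (algebraMap K F)).mulVec x = 0) :
    toENat (Algebra.trdeg K F) + (r + 1 : ℕ) ≤ (Fintype.card n + Fintype.card ι : ℕ) := by
  classical
  obtain ⟨i₀, hi₀⟩ := Function.ne_iff.1 hc
  let S : Finset F := (Finset.univ.erase i₀).image fun i => c i / c i₀
  let L := IntermediateField.adjoin K (S : Set F)
  have hcL : ∀ i, c i / c i₀ ∈ L := fun i => by
    obtain rfl | hi := eq_or_ne i i₀
    · rw [div_self hi₀]
      exact L.one_mem
    · exact IntermediateField.subset_adjoin K _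
        (Finset.mem_image_of_mem _ (Finset.mem_erase.2 ⟨hi, Finset.mem_univ i⟩))
  let d : ι → L := fun i => ⟨c i / c i₀, hcL i⟩
  have hd : d ≠ 0 := fun h => one_ne_zero <| by
    rw [← div_self hi₀]
    exact congrArg Subtype.val (congrFun h i₀)
  have hdx : (∑ i, algebraMap L F (d i) • (B i).map (algebraMap K F)).mulVec x = 0 := by
    have hdc : ∀ i, algebraMap L F (d i) = (c i₀)⁻¹ * c i := fun i => div_eq_inv_mul _ _
    simp only [hdc, mul_smul, ← Finset.smul_sum, Matrix.smul_mulVec, hcx, smul_zero]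
  have hspan := hB.finrank_span_add_le hd hdx
  have hS : S.card + 1 ≤ Fintype.card ι := by
    rw [← Finset.card_univ, ← Finset.card_erase_add_one (Finset.mem_univ i₀)]
    exact Nat.add_le_add_right Finset.card_image_le 1
  have htrdeg : toENat (Algebra.trdeg K F) ≤
      (S.card + Module.finrank L (Submodule.span L (Set.range x)) : ℕ) := by
    simpa [L] using Cardinal.toENat.monotone' (trdeg_le_card_add_finrank_span
      (Set.finite_range x) (adjoin_eq_top_of_adjoin_eq_top L hx))
  refine (add_le_add_left htrdeg _).trans ?_
  norm_cast
  lia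

end TranscendenceDegree

section Hessian

variable {R σ : Type*} [CommRing R]

/-- The symmetric matrix of second partial derivatives at the origin; for a quadratic form, this is
the matrix of its polar bilinear form. -/
noncomputable def hessian (f : MvPolynomial σ R) : Matrix σ σ R :=
  Matrix.of fun i j => constantCoeff (pderiv j (pderiv i f))

theorem polarMatrix_eq_hessian {N : ℕ} (f : MvPolynomial (Fin N) ℂ) :
    polarMatrix f = hessian f := by
  ext i j
  obtain rfl | hij := eq_or_ne i j
  · simp [polarMatrix, hessian, constantCoeff_eq, coeff_pderiv, ← Finsupp.single_add,
      one_add_one_eq_two, mul_comm]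
  · simp [polarMatrix, hessian, constantCoeff_eq, coeff_pderiv, hij, add_comm]

theorem pderiv_eq_sum_hessian [Fintype σ] {f : MvPolynomial σ R} (hf : f.IsHomogeneous 2) (i : σ) :
    pderiv i f = ∑ j, C (hessian f i j) * X j := by
  have hf' : (pderiv i f).IsHomogeneous 1 := hf.pderiv
  rw [← one_smul ℕ (pderiv i f), ← hf'.sum_X_mul_pderiv]
  refine Finset.sum_congr rfl fun j _ => ?_
  rw [mul_comm, hessian, Matrix.of_apply, constantCoeff_eq,
    ← totalDegree_eq_zero_iff_eq_C.1 (Nat.le_zero.1 (hf'.pderiv (i := j)).totalDegree_le)]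

end Hessian

section JacobianIdeal

open Cardinal (toENat)

/-- The ideal generated by the maximal minors of the Jacobian matrix of the family `q`. A
non-injective choice of columns only contributes the generator `0`. -/
noncomputable def jacobianIdeal {R ι σ : Type*} [CommRing R] [Fintype ι] [DecidableEq ι]
    (q : ι → MvPolynomial σ R) : Ideal (MvPolynomial σ R) :=
  Ideal.span {p | ∃ g : ι → σ, p = (Matrix.of fun i j => pderiv (g j) (q i)).det}

theorem adjoin_image_algebraMap_residueField_eq_top {K A : Type*} [Field K] [CommRing A]
    [Algebra K A] (P : Ideal A) [P.IsPrime] {S : Set A} (hS : Algebra.adjoin K S = ⊤) :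
    IntermediateField.adjoin K (algebraMap A P.ResidueField '' S) = ⊤ := by
  have hmem : ∀ a, algebraMap A P.ResidueField a ∈
      IntermediateField.adjoin K (algebraMap A P.ResidueField '' S) := fun a => by
    refine IntermediateField.algebra_adjoin_le_adjoin K _ ?_
    rw [← IsScalarTower.coe_toAlgHom' K, ← AlgHom.map_adjoin, hS]
    exact Subalgebra.mem_map.2 ⟨a, Algebra.mem_top, rfl⟩
  refine top_unique fun y _ => ?_
  obtain ⟨a, b, -, rfl⟩ := IsFractionRing.div_surjective (A ⧸ P) y
  obtain ⟨a, rfl⟩ := Ideal.Quotient.mk_surjective a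
  obtain ⟨b, rfl⟩ := Ideal.Quotient.mk_surjective b
  exact div_mem (hmem a) (hmem b)

variable {K ι σ : Type*} [Field K] [Fintype ι] [DecidableEq ι] [Fintype σ]
  {q : ι → MvPolynomial σ K}

theorem exists_mulVec_eq_zero_of_jacobianIdeal_le (hq : ∀ i, (q i).IsHomogeneous 2)
    {P : Ideal (MvPolynomial σ K)} [P.IsPrime] (hP : jacobianIdeal q ≤ P) :
    ∃ c : ι → P.ResidueField, c ≠ 0 ∧
      (∑ i, c i • (hessian (q i)).map (algebraMap K P.ResidueField)).mulVec
        (fun j => algebraMap (MvPolynomial σ K) P.ResidueField (X j)) = 0 := by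
  let φ := algebraMap (MvPolynomial σ K) P.ResidueField
  obtain ⟨c, hc, hrel⟩ := exists_ne_zero_vecMul_eq_zero
    (M := Matrix.of fun i j => φ (pderiv j (q i))) fun g => by
      have hg : (Matrix.of fun i j => pderiv (g j) (q i)).det ∈ P :=
        hP (Ideal.subset_span ⟨g, rfl⟩)
      rw [← Ideal.algebraMap_residueField_eq_zero, RingHom.map_det] at hg
      exact hg
  refine ⟨c, hc, funext fun j => ?_⟩
  rw [← congrFun hrel j]
  have hφC : ∀ a, algebraMap K P.ResidueField a = φ (C a) := IsScalarTower.algebraMap_apply K _ _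
  simp only [Matrix.mulVec, Matrix.vecMul, dotProduct, Matrix.sum_apply, Matrix.smul_apply,
    Matrix.map_apply, Matrix.of_apply, smul_eq_mul, pderiv_eq_sum_hessian (hq _), map_sum, map_mul,
    Finset.sum_mul, Finset.mul_sum, hφC, mul_assoc, φ]
  exact Finset.sum_comm

theorem MinRankGE.add_one_le_height_jacobianIdeal [IsAlgClosed K] {r : ℕ}
    (hq : ∀ i, (q i).IsHomogeneous 2) (hr : MinRankGE r fun i => hessian (q i)) :
    (r + 1 : ℕ) ≤ (jacobianIdeal q).height + Fintype.card ι := by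
  rw [← tsub_le_iff_right, le_height_iff_forall_isPrime]
  intro P hP hle
  rw [tsub_le_iff_right]
  obtain ⟨c, hc, hrel⟩ := exists_mulVec_eq_zero_of_jacobianIdeal_le hq hle
  have hadjoin := adjoin_image_algebraMap_residueField_eq_top P (adjoin_range_X (R := K) (σ := σ))
  rw [← Set.range_comp] at hadjoin
  have htrdeg := hr.trdeg_add_le hadjoin hc hrel
  have htrdeg_le : toENat (Algebra.trdeg K (MvPolynomial σ K ⧸ P)) ≤
      toENat (Algebra.trdeg K P.ResidueField) :=
    toENat.monotone' <| _root_.trdeg_le_of_injective (IsScalarTower.toAlgHom K _ _)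
      (IsFractionRing.injective (MvPolynomial σ K ⧸ P) P.ResidueField)
  have hcard := (card_le_height_add_trdeg K σ P).trans (add_le_add_right htrdeg_le _)
  rw [Nat.card_eq_fintype_card] at hcard
  have hfin : toENat (Algebra.trdeg K P.ResidueField) ≠ ⊤ := fun h => by
    rw [h, top_add, top_le_iff] at htrdeg
    exact ENat.natCast_ne_top _ htrdeg
  refine (ENat.add_le_add_iff_left hfin).1 ?_
  calc _ ≤ ((Fintype.card σ + Fintype.card ι : ℕ) : ℕ∞) := htrdeg
    _ ≤ P.height + toENat (Algebra.trdeg K P.ResidueField) + Fintype.card ι := by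
      push_cast
      gcongr
    _ = _ := by ring

end JacobianIdeal

section JacobianCriterion

variable {A ι : Type*} [CommRing A] [Fintype ι]

theorem linearIndependent_toCotangent [IsLocalRing A] {x : ι → maximalIdeal A}
    (hx : ∀ c : ι → A, ∑ i, c i * x i ∈ maximalIdeal A ^ 2 → ∀ i, c i ∈ maximalIdeal A) :
    LinearIndependent (ResidueField A) fun i => (maximalIdeal A).toCotangent (x i) := by
  rw [Fintype.linearIndependent_iff]
  intro c hc i
  choose d hd using fun i => residue_surjective (c i)
  have hsum : (maximalIdeal A).toCotangent (∑ i, d i • x i) = 0 := by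
    rw [map_sum, ← hc]
    refine Finset.sum_congr rfl fun i _ => ?_
    rw [map_smul, ← hd i, ← ResidueField.algebraMap_eq, algebraMap_smul]
  rw [Ideal.toCotangent_eq_zero] at hsum
  rw [← hd i, residue_eq_zero_iff]
  exact hx d (by simpa using hsum) i

variable {P : Ideal A} [P.IsPrime] {q : ι → A}

theorem mem_of_sum_mul_mem_sq_of_derivation {R : Type*} [CommRing R] [Algebra R A] [DecidableEq ι]
    (D : ι → Derivation R A A) (hqP : ∀ i, q i ∈ P)
    (hD : (Matrix.of fun i j => D j (q i)).det ∉ P) {c : ι → A} (hc : ∑ i, c i * q i ∈ P ^ 2)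
    (i : ι) : c i ∈ P := by
  have hsq : ∀ j, ∀ f ∈ P ^ 2, D j f ∈ P := fun j f hf => by
    rw [pow_two] at hf
    refine Submodule.mul_induction_on hf (fun a ha b hb => ?_) fun a b ha hb => ?_
    · rw [Derivation.leibniz]
      exact P.add_mem (P.mul_mem_right _ ha) (P.mul_mem_right _ hb)
    · rw [map_add]
      exact P.add_mem ha hb
  have hDc : ∀ j, ∑ i, c i * D j (q i) ∈ P := fun j => by
    have hj := hsq j _ hc
    simp only [map_sum, Derivation.leibniz, smul_eq_mul, Finset.sum_add_distrib] at hj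
    exact (P.add_mem_iff_left (P.sum_mem fun i _ => P.mul_mem_right _ (hqP i))).1 hj
  have hdet : ((Ideal.Quotient.mk P).mapMatrix (Matrix.of fun i j => D j (q i))).det ≠ 0 := by
    rwa [← RingHom.map_det, ne_eq, Ideal.Quotient.eq_zero_iff_mem]
  have hzero := Matrix.eq_zero_of_vecMul_eq_zero hdet (v := Ideal.Quotient.mk P ∘ c) <| by
    funext j
    simpa [Matrix.vecMul, dotProduct] using Ideal.Quotient.eq_zero_iff_mem.2 (hDc j)
  exact Ideal.Quotient.eq_zero_iff_mem.1 (congrFun hzero i)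

theorem mem_maximalIdeal_of_sum_mul_mem_sq
    (hq : ∀ c : ι → A, ∑ i, c i * q i ∈ P ^ 2 → ∀ i, c i ∈ P)
    {c : ι → Localization.AtPrime P}
    (hc : ∑ i, c i * algebraMap A (Localization.AtPrime P) (q i) ∈
      maximalIdeal (Localization.AtPrime P) ^ 2) (i : ι) :
    c i ∈ maximalIdeal (Localization.AtPrime P) := by
  obtain ⟨b, hb⟩ := IsLocalization.exist_integer_multiples_of_finite P.primeCompl c
  choose a ha using hb
  simp only [Algebra.smul_def] at ha
  have hsum : algebraMap A (Localization.AtPrime P) (∑ i, a i * q i) ∈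
      maximalIdeal (Localization.AtPrime P) ^ 2 := by
    simpa only [map_sum, map_mul, ha, mul_assoc, Finset.mul_sum] using
      Ideal.mul_mem_left _ (algebraMap A _ b) hc
  rw [← Localization.AtPrime.map_eq_maximalIdeal, ← Ideal.map_pow,
    IsLocalization.algebraMap_mem_map_algebraMap_iff P.primeCompl] at hsum
  obtain ⟨t, ht, hsum⟩ := hsum
  have hta := hq (fun i => t * a i) (by simpa only [mul_assoc, Finset.mul_sum] using hsum) i
  have hai : a i ∈ P := ((inferInstance : P.IsPrime).mem_or_mem hta).resolve_left ht
  rw [← IsLocalization.AtPrime.to_map_mem_maximal_iff (Localization.AtPrime P) P, ha] at hai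
  exact (Ideal.unit_mul_mem_iff_mem _ (IsLocalization.map_units _ b)).1 hai

theorem isPrime_map_span_range_and_card_le_height [IsRegularRing A] (hqP : ∀ i, q i ∈ P)
    (hq : ∀ c : ι → A, ∑ i, c i * q i ∈ P ^ 2 → ∀ i, c i ∈ P) :
    ((Ideal.span (Set.range q)).map (algebraMap A (Localization.AtPrime P))).IsPrime ∧
      Fintype.card ι ≤ P.height := by
  let x : ι → maximalIdeal (Localization.AtPrime P) := fun i =>
    ⟨algebraMap A _ (q i), (IsLocalization.AtPrime.to_map_mem_maximal_iff _ P _).2 (hqP i)⟩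
  have hx : (Ideal.span (Set.range q)).map (algebraMap A (Localization.AtPrime P)) =
      Ideal.span (Set.range fun i => (x i : Localization.AtPrime P)) := by
    rw [Ideal.map_span, ← Set.range_comp]
    rfl
  obtain ⟨hreg, hdim⟩ := isRegularLocalRing_quotient_span_range <|
    linearIndependent_toCotangent (x := x) fun c => mem_maximalIdeal_of_sum_mul_mem_sq hq
  refine ⟨?_, ?_⟩
  · rw [hx, ← Ideal.Quotient.isDomain_iff_prime]
    exact isDomain_of_isRegularLocalRing _
  · rw [IsLocalization.AtPrime.ringKrullDim_eq_height P (Localization.AtPrime P),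
      Nat.card_eq_fintype_card] at hdim
    exact_mod_cast hdim ▸ le_add_of_nonneg_left ringKrullDim_nonneg_of_nontrivial

variable {K σ : Type*} [Field K] [Finite σ] [DecidableEq ι] {f : ι → MvPolynomial σ K}
  {P : Ideal (MvPolynomial σ K)} [P.IsPrime]

theorem isPrime_map_span_range_and_card_le_height_of_not_jacobianIdeal_le
    (hfP : Ideal.span (Set.range f) ≤ P) (hP : ¬ jacobianIdeal f ≤ P) :
    ((Ideal.span (Set.range f)).map (algebraMap _ (Localization.AtPrime P))).IsPrime ∧
      Fintype.card ι ≤ P.height := by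
  rw [jacobianIdeal, Ideal.span_le, Set.not_subset] at hP
  obtain ⟨_, ⟨g, rfl⟩, hg⟩ := hP
  have hfP : ∀ i, f i ∈ P := fun i => hfP (Ideal.subset_span ⟨i, rfl⟩)
  exact isPrime_map_span_range_and_card_le_height hfP fun c =>
    mem_of_sum_mul_mem_sq_of_derivation (fun j => pderiv (g j)) hfP hg

end JacobianCriterion

section HomogeneousIdeal

attribute [local instance] MvPolynomial.gradedAlgebra

variable {R σ : Type*} [CommRing R] {I : Ideal (MvPolynomial σ R)}

theorem homogeneousComponent_pow_succ_eq_zero {c : MvPolynomial σ R} (hc : constantCoeff c = 0)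
    (n : ℕ) : homogeneousComponent n (c ^ (n + 1)) = 0 := by
  have hmem : c ∈ idealOfVars σ R ^ 1 := (mem_pow_idealOfVars_iff' 1 c).2 fun x hx => by
    rwa [(Finsupp.degree_eq_zero_iff x).1 (Nat.lt_one_iff.1 hx)]
  rw [pow_one] at hmem
  have hcoeff := (mem_pow_idealOfVars_iff' (n + 1) _).1 (Ideal.pow_mem_pow hmem (n + 1))
  ext x
  rw [coeff_homogeneousComponent, coeff_zero, ite_eq_right_iff]
  exact fun hx => hcoeff x (by lia)

theorem mem_of_mul_one_sub_mem (hI : I.IsHomogeneous (homogeneousSubmodule σ R))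
    {c : MvPolynomial σ R} (hc : c * (1 - c) ∈ I) (hc0 : constantCoeff c = 0) : c ∈ I := by
  have hpow (n : ℕ) : c - c ^ (n + 1) ∈ I := by
    have : c - c ^ (n + 1) = c * (1 - c) * ∑ i ∈ Finset.range n, c ^ i := by
      rw [mul_assoc, mul_neg_geom_sum]
      ring
    rw [this]
    exact I.mul_mem_right _ hc
  refine (mem_iff_homogeneousComponent_mem hI c).2 fun n => ?_
  simpa [homogeneousComponent_pow_succ_eq_zero hc0] using
    homogeneousComponent_mem_of_mem hI (hpow n) n

theorem mem_or_one_sub_mem_of_mul_one_sub_mem [IsDomain R]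
    (hI : I.IsHomogeneous (homogeneousSubmodule σ R))
    (hI0 : I ≤ RingHom.ker (constantCoeff (R := R) (σ := σ))) {c : MvPolynomial σ R}
    (hc : c * (1 - c) ∈ I) : c ∈ I ∨ 1 - c ∈ I := by
  have h0 := hI0 hc
  rw [RingHom.mem_ker, map_mul, mul_eq_zero] at h0
  exact h0.imp (mem_of_mul_one_sub_mem hI hc) <|
    mem_of_mul_one_sub_mem hI (by rwa [sub_sub_cancel, mul_comm])

end HomogeneousIdeal

section AffineCone

theorem card_le_height_ker_constantCoeff (K σ : Type*) [Field K] [Finite σ] :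
    (Nat.card σ : ℕ∞) ≤ (RingHom.ker (constantCoeff (R := K) (σ := σ))).height := by
  let p := RingHom.ker (constantCoeff (R := K) (σ := σ))
  have : p.IsPrime := RingHom.ker_isPrime _
  have : Algebra.IsAlgebraic K (MvPolynomial σ K ⧸ p) := ⟨fun y => by
    obtain ⟨f, rfl⟩ := Ideal.Quotient.mk_surjective y
    have : Ideal.Quotient.mk p f = algebraMap K _ (constantCoeff f) := by
      rw [IsScalarTower.algebraMap_apply K (MvPolynomial σ K), Ideal.Quotient.algebraMap_eq,
        Ideal.Quotient.eq, RingHom.mem_ker, algebraMap_eq, map_sub, constantCoeff_C, sub_self]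
    rw [this]
    exact isAlgebraic_algebraMap _⟩
  simpa [trdeg_eq_zero] using card_le_height_add_trdeg K σ p

theorem span_range_le_ker_constantCoeff {R ι σ : Type*} [CommRing R]
    {q : ι → MvPolynomial σ R} {d : ℕ} (hd : d ≠ 0) (hq : ∀ i, (q i).IsHomogeneous d) :
    Ideal.span (Set.range q) ≤ RingHom.ker (constantCoeff (R := R) (σ := σ)) := by
  rw [Ideal.span_le]
  rintro _ ⟨i, rfl⟩
  rw [SetLike.mem_coe, RingHom.mem_ker, constantCoeff_eq]
  exact (hq i).coeff_eq_zero (by simpa using hd.symm)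

variable {K ι σ : Type*} [Field K] [Fintype σ]

theorem card_le_ringKrullDim_quotient_add_card [Fintype ι] {q : ι → MvPolynomial σ K}
    (hq : Ideal.span (Set.range q) ≤ RingHom.ker (constantCoeff (R := K) (σ := σ))) :
    (Fintype.card σ : WithBot ℕ∞) ≤
      ringKrullDim (MvPolynomial σ K ⧸ Ideal.span (Set.range q)) + Fintype.card ι := by
  have := RingHom.ker_isPrime (constantCoeff (R := K) (σ := σ))
  have hcard : (Set.range q).encard ≤ Fintype.card ι := by
    rw [← Set.image_univ, ← ENat.card_eq_coe_fintype_card, ← Set.encard_univ]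
    exact Set.encard_image_le q _
  have horigin := card_le_height_ker_constantCoeff K σ
  rw [Nat.card_eq_fintype_card] at horigin
  calc (Fintype.card σ : WithBot ℕ∞)
      ≤ (RingHom.ker (constantCoeff (R := K) (σ := σ))).height := by exact_mod_cast horigin
    _ ≤ ringKrullDim (MvPolynomial σ K ⧸ Ideal.span (Set.range q)) + (Set.range q).encard :=
      Ideal.height_le_ringKrullDim_quotient_add_encard _ (Ideal.span_le.1 hq)
    _ ≤ _ := by
      gcongr
      exact_mod_cast hcard

theorem ringKrullDim_quotient_add_le_card {J : Ideal (MvPolynomial σ K)} {n : ℕ}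
    (hJ : n ≤ J.height) : ringKrullDim (MvPolynomial σ K ⧸ J) + n ≤ Fintype.card σ := by
  calc ringKrullDim (MvPolynomial σ K ⧸ J) + n
      ≤ ringKrullDim (MvPolynomial σ K ⧸ J) + J.height := by
        gcongr
        exact_mod_cast hJ
    _ ≤ ringKrullDim (MvPolynomial σ K) := ringKrullDim_quotient_add_height_le J
    _ = Fintype.card σ := by
      rw [MvPolynomial.ringKrullDim_of_isNoetherianRing, ringKrullDim_eq_zero_of_field, zero_add,
        Nat.card_eq_fintype_card]

end AffineCone

section Quadrics

attribute [local instance] MvPolynomial.gradedAlgebra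

variable {K ι σ : Type*} [Field K] [IsAlgClosed K] [Fintype σ] {r : ℕ}

theorem MinRankGE.le_height_jacobianIdeal [Fintype ι] [DecidableEq ι] {q : ι → MvPolynomial σ K}
    (hr : MinRankGE r fun i => hessian (q i)) (hq : ∀ i, (q i).IsHomogeneous 2) {n : ℕ}
    (hn : Fintype.card ι + n ≤ r + 1) : n ≤ (jacobianIdeal q).height := by
  refine (ENat.add_le_add_iff_right (ENat.natCast_ne_top (Fintype.card ι))).1 ?_
  refine le_trans ?_ (hr.add_one_le_height_jacobianIdeal hq)
  exact_mod_cast (add_comm _ _).trans_le hn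

theorem MinRankGE.card_le_height_span_range [Fintype ι] {q : ι → MvPolynomial σ K}
    (hr : MinRankGE r fun i => hessian (q i)) (hq : ∀ i, (q i).IsHomogeneous 2)
    (hcard : 2 * Fintype.card ι ≤ r + 1) :
    Fintype.card ι ≤ (Ideal.span (Set.range q)).height := by
  classical
  refine le_height_iff_forall_isPrime.2 fun P _ hqP => ?_
  by_cases hP : jacobianIdeal q ≤ P
  · exact (hr.le_height_jacobianIdeal hq (by lia)).trans (Ideal.height_mono hP)
  · exact (isPrime_map_span_range_and_card_le_height_of_not_jacobianIdeal_le hqP hP).2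

variable {l : ℕ} {q : Fin l → MvPolynomial σ K}

theorem MinRankGE.isWeaklyRegular (hr : MinRankGE r fun i => hessian (q i))
    (hq : ∀ i, (q i).IsHomogeneous 2) (hl : 2 * l ≤ r + 1) :
    RingTheory.Sequence.IsWeaklyRegular (MvPolynomial σ K) (List.ofFn q) :=
  isWeaklyRegular_ofFn fun j hj => by
    have hj' := (hr.comp (Fin.castLE_injective hj)).card_le_height_span_range
      (q := q ∘ Fin.castLE hj) (fun i => hq _) (by rw [Fintype.card_fin]; lia)
    rwa [Fintype.card_fin] at hj'

theorem MinRankGE.isPrime_span_range (hr : MinRankGE r fun i => hessian (q i))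
    (hq : ∀ i, (q i).IsHomogeneous 2) (hl : 2 * l + 1 ≤ r) :
    (Ideal.span (Set.range q)).IsPrime := by
  have hker := span_range_le_ker_constantCoeff two_ne_zero hq
  have hhom : (Ideal.span (Set.range q)).IsHomogeneous (homogeneousSubmodule σ K) :=
    Ideal.homogeneous_span _ _ <| Set.forall_mem_range.2 fun i => ⟨2, hq i⟩
  rw [← ofList_ofFn] at hker hhom ⊢
  refine isPrime_ofList_of_isPrime_map (hr.isWeaklyRegular hq (by lia)) ?_
    (fun c => mem_or_one_sub_mem_of_mul_one_sub_mem hhom hker) fun p _ hqp hp => ?_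
  · exact ne_top_of_le_ne_top (RingHom.ker_ne_top _) hker
  rw [List.length_ofFn] at hp
  rw [ofList_ofFn] at hqp ⊢
  refine (isPrime_map_span_range_and_card_le_height_of_not_jacobianIdeal_le hqp fun hle => ?_).1
  refine hp.not_ge ((hr.le_height_jacobianIdeal hq ?_).trans (Ideal.height_mono hle))
  rw [Fintype.card_fin]
  lia

theorem MinRankGE.ringKrullDim_quotient_add_eq (hr : MinRankGE r fun i => hessian (q i))
    (hq : ∀ i, (q i).IsHomogeneous 2) (hl : 2 * l ≤ r + 1) :
    ringKrullDim (MvPolynomial σ K ⧸ Ideal.span (Set.range q)) + l = Fintype.card σ := by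
  have hheight := hr.card_le_height_span_range hq (by rwa [Fintype.card_fin])
  have hlower := card_le_ringKrullDim_quotient_add_card
    (span_range_le_ker_constantCoeff two_ne_zero hq)
  rw [Fintype.card_fin] at hheight hlower
  exact (ringKrullDim_quotient_add_le_card hheight).antisymm hlower

theorem MinRankGE.ringKrullDim_quotient_sup_jacobianIdeal_add_le {e : ℕ}
    (hr : MinRankGE r fun i => hessian (q i)) (hq : ∀ i, (q i).IsHomogeneous 2)
    (hl : 2 * l + e ≤ r + 1) :
    ringKrullDim (MvPolynomial σ K ⧸ (Ideal.span (Set.range q) ⊔ jacobianIdeal q)) + e ≤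
      ringKrullDim (MvPolynomial σ K ⧸ Ideal.span (Set.range q)) := by
  have hheight := (hr.le_height_jacobianIdeal hq (n := e + l) (by rw [Fintype.card_fin]; lia)).trans
    (Ideal.height_mono (le_sup_right (a := Ideal.span (Set.range q))))
  rw [← ENat.WithBot.add_le_add_natCast_right_iff (c := l),
    hr.ringKrullDim_quotient_add_eq hq (by lia), add_assoc]
  exact_mod_cast ringKrullDim_quotient_add_le_card hheight

end Quadrics

theorem complete_intersection_of_quadrics_general {K σ : Type*} [Field K] [IsAlgClosed K]
    [Fintype σ] {l e : ℕ} (he : 2 ≤ e) (q : Fin l → MvPolynomial σ K)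
    (hhom : ∀ i, (q i).IsHomogeneous 2)
    (hrk : MinRankGE (2 * l + e - 1) fun i => hessian (q i)) :
    (Ideal.span (Set.range q)).IsPrime ∧
    ringKrullDim (MvPolynomial σ K ⧸ Ideal.span (Set.range q)) = (Fintype.card σ - l : ℕ) ∧
    ringKrullDim (MvPolynomial σ K ⧸ (Ideal.span (Set.range q) ⊔ jacobianIdeal q)) + (e : ℕ) ≤
      ringKrullDim (MvPolynomial σ K ⧸ Ideal.span (Set.range q)) := by
  have hprime := hrk.isPrime_span_range hhom (by lia)
  refine ⟨hprime, ?_, hrk.ringKrullDim_quotient_sup_jacobianIdeal_add_le hhom (by lia)⟩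
  have hdim := hrk.ringKrullDim_quotient_add_eq hhom (by lia)
  have hl : l ≤ Fintype.card σ := by
    have : (l : WithBot ℕ∞) ≤ Fintype.card σ := by
      rw [← hdim]
      exact le_add_of_nonneg_left ringKrullDim_nonneg_of_nontrivial
    exact_mod_cast this
  rw [← ENat.WithBot.add_natCast_cancel (c := l), hdim]
  exact_mod_cast (Nat.sub_add_cancel hl).symm

/-- Proposition 4.2: let `Q ⊂ ℙ^{N-1}` be the common zero set of quadratic forms
`q_1, …, q_l` (here given as homogeneous degree-2 polynomials) whose tuple rank
satisfies `rk(q_{[1,l]}) ≥ 2l + e - 1` for some `e ≥ 4`, i.e. every nonzero linear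
combination of the associated symmetric matrices has rank `≥ 2l + e - 1`.  Then `Q`
is an irreducible reduced complete intersection of codimension `l` (the ideal
generated by the `q_i` is prime and the affine cone has dimension `N - l`), and
`codim (Sing Q ⊂ Q) ≥ e` (the singular cone, cut out additionally by the `l × l`
minors of the Jacobian matrix, has dimension at most `dim Q - e`). -/
theorem complete_intersection_of_quadrics {N l e : ℕ} (hl : 1 ≤ l)
    (hN : l + 4 ≤ N) (he : 4 ≤ e)
    (q : Fin l → MvPolynomial (Fin N) ℂ)
    (hhom : ∀ i, (q i).IsHomogeneous 2)
    (hrk : ∀ lam : Fin l → ℂ, lam ≠ 0 →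
      2 * l + e - 1 ≤ (∑ i, lam i • polarMatrix (q i)).rank) :
    (Ideal.span (Set.range q)).IsPrime ∧
    ringKrullDim (MvPolynomial (Fin N) ℂ ⧸ Ideal.span (Set.range q)) = (N - l : ℕ) ∧
    ringKrullDim (MvPolynomial (Fin N) ℂ ⧸
        (Ideal.span (Set.range q) ⊔ Ideal.span
          {p | ∃ g : Fin l → Fin N,
            p = (Matrix.of fun i j => MvPolynomial.pderiv (g j) (q i)).det}))
      + (e : ℕ)
      ≤ ringKrullDim (MvPolynomial (Fin N) ℂ ⧸ Ideal.span (Set.range q)) := by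
  simp only [polarMatrix_eq_hessian] at hrk
  have hmain := complete_intersection_of_quadrics_general (by lia) q hhom hrk
  rwa [Fintype.card_fin] at hmain
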